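/- arXiv:2309.15598 — 2 statements merged into one kernel-verified Lean document; each statement's English description precedes it below -/
import Mathlib

section
/- Let K ⊂ ℝ^{n+1} be a smooth, strictly convex body with the origin in its interior, whose support function h and Gauss curvature 𝒦 satisfy the isotropic L_p dual Minkowski equation h^{p-1} |Dh|^{n+1-q} 𝒦 = 1 on S^n. Then the polar body K* satisfies the isotropic L_{−q} dual Minkowski equation (h*)^{−q−1} |Dh*|^{n+1+p} 𝒦* = 1 on S^n, where h* and 𝒦* are the support function and Gauss curvature of ∂K*. -/
open MeasureTheory Matrix Metric
open scoped RealInnerProductSpace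

noncomputable section

/-- Euclidean space `ℝ^{n+1}`. -/
abbrev Euc (n : ℕ) : Type := EuclideanSpace ℝ (Fin (n + 1))

/-- The Euclidean Hessian matrix of `H : ℝ^{n+1} → ℝ` at `x`. -/
def ehess (n : ℕ) (H : Euc n → ℝ) (x : Euc n) : Matrix (Fin (n + 1)) (Fin (n + 1)) ℝ :=
  Matrix.of fun i j =>
    fderiv ℝ (fun y => fderiv ℝ H y (EuclideanSpace.single j 1)) x (EuclideanSpace.single i 1)

/-- For the 1-homogeneous extension `H` of the support function `h` and `x ∈ S^n`, the matrix
`D²H(x) + h(x)·x xᵀ`.  Its restriction to the tangent space `x^⊥ = T_x S^n` is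
`A[h] = ∇̄²h + h ḡ`, and `x` is an eigenvector with eigenvalue `h(x)`. -/
def bmat (n : ℕ) (H : Euc n → ℝ) (x : Euc n) : Matrix (Fin (n + 1)) (Fin (n + 1)) ℝ :=
  ehess n H x + Matrix.of fun i j => H x * (x i * x j)

/-- `σ_n = det A[h] = det(∇̄²h + h ḡ)/det ḡ`, computed as `det(bmat)/h`. -/
def sigman (n : ℕ) (H : Euc n → ℝ) (x : Euc n) : ℝ :=
  Matrix.det (bmat n H x) / H x

/-- The Gauss curvature `𝒦 = 1/σ_n`. -/
def gaussCurv (n : ℕ) (H : Euc n → ℝ) (x : Euc n) : ℝ := (sigman n H x)⁻¹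

/-- The round (spherical) gradient `∇̄f` at `x ∈ S^n`: the Euclidean gradient of the
0-homogeneous extension `y ↦ f(y/‖y‖)`.  It depends only on `f|_{S^n}` and lies in `T_x S^n`. -/
def sphGrad (n : ℕ) (f : Euc n → ℝ) (x : Euc n) : Euc n :=
  gradient (fun y => f (‖y‖⁻¹ • y)) x

/-- The function `log (h^{n+2}/𝒦)` (as a function of `y`; on the sphere it agrees with the
centro-affine expression appearing in the paper). -/
def logQ (n : ℕ) (H : Euc n → ℝ) (y : Euc n) : ℝ :=
  Real.log ((H y) ^ (n + 2) / gaussCurv n H y)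

/-- The centro-affine inner product `g(∇f, ∇u) = h ⟨A[h]⁻¹ ∇̄f, ∇̄u⟩` of the `g`-gradients of
`f` and `u`, where `g = A[h]/h` is the centro-affine metric. -/
def gInner (n : ℕ) (H f u : Euc n → ℝ) (x : Euc n) : ℝ :=
  H x * ∑ i, (bmat n H x)⁻¹.mulVec (fun j => sphGrad n f x j) i * sphGrad n u x i

/-- The squared centro-affine norm `|∇f|_g²` of the `g`-gradient of `f`. -/
def gNormSq (n : ℕ) (H f : Euc n → ℝ) (x : Euc n) : ℝ := gInner n H f f x

/-- The centro-affine Laplacian `Δf = div_g(∇ f)` (with respect to the centro-affine connection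
`∇` induced by the centro-affine normal `ξ = X`, and the centro-affine metric `g = A[h]/h`),
computed via the identity `Δf = tr_g(A[hf]/h) - n f`, i.e.
`Δf = tr(B[h]⁻¹ B[hf]) - (n+1) f` where `B[u] = D²ũ + u·x xᵀ` for the 1-homogeneous
extension `ũ` of `u`. -/
def caLap (n : ℕ) (H f : Euc n → ℝ) (x : Euc n) : ℝ :=
  Matrix.trace ((bmat n H x)⁻¹ * bmat n (fun y => H y * f (‖y‖⁻¹ • y)) x) - (n + 1) * f x

/-- The spherical Lebesgue measure on `S^n ⊂ ℝ^{n+1}` (up to a positive constant). -/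
def sphMeasure (n : ℕ) : Measure (sphere (0 : Euc n) 1) :=
  (volume : Measure (Euc n)).toSphere

/-- The density of the cone-volume-type measure `dV = h σ_n dμ` with respect to the spherical
Lebesgue measure. -/
def volDens (n : ℕ) (H : Euc n → ℝ) (x : Euc n) : ℝ := H x * sigman n H x

/-!
The gradient of `h² / 2` is the duality map `h ∇h`, and for a convex body and its polar the two
duality maps are mutually inverse: the polar inequality `⟪x, w⟫ ≤ h*(x) h(w)` is an equality at
`w = ∇h*(x)`, which gives `h(∇h*(x)) = 1` and `∇h(∇h*(x)) = x / h*(x)`. Hence their derivatives at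
corresponding points are inverse to each other. Since `D²h(v) v = 0` and `⟪v, ∇h(v)⟫ = h(v)`, the
rank-one term in `h D²h + ∇h ⊗ ∇h` may be replaced by `h v ⊗ h v` without changing the determinant,
so that `det D(h ∇h)(v) = h(v)^{n+2} / 𝒦(v)` for unit `v`. For `u` and `v = ∇h*(u) / |∇h*(u)|` this
yields `𝒦(v) 𝒦*(u) = (h(v) h*(u))^{n+2}`, and `h(v) = 1 / |Dh*(u)|`, `|Dh(v)| = 1 / h*(u)` turn the
equation for `h` at `v` into the one for `h*` at `u`.
-/

open InnerProductSpace (rankOne)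

section Determinant

variable {𝕜 V : Type*} [Field 𝕜] [AddCommGroup V] [Module 𝕜 V] [FiniteDimensional 𝕜 V]

lemma det_add_smulRight_congr_vector {T : V →ₗ[𝕜] V} {f : Module.Dual 𝕜 V} {a b : V}
    (hfT : ∀ z, f (T z) = 0) (hab : f a = f b) (ha : f a ≠ 0) (g : Module.Dual 𝕜 V) :
    LinearMap.det (T + g.smulRight a) = LinearMap.det (T + g.smulRight b) := by
  have hfactor : T + g.smulRight b =
      LinearMap.transvection ((f a)⁻¹ • f) (b - a) ∘ₗ (T + g.smulRight a) := by
    ext z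
    simp [LinearMap.transvection.apply, hfT, smul_sub, ha, mul_comm (g z)]
  rw [hfactor, LinearMap.det_comp, LinearMap.transvection.det]
  simp [hab]

lemma det_add_smulRight_congr_functional {T : V →ₗ[𝕜] V} {v : V} {f g : Module.Dual 𝕜 V}
    (hTv : T v = 0) (hfg : f v = g v) (hf : f v ≠ 0) (a : V) :
    LinearMap.det (T + f.smulRight a) = LinearMap.det (T + g.smulRight a) := by
  have hfactor : T + g.smulRight a =
      (T + f.smulRight a) ∘ₗ LinearMap.transvection ((f v)⁻¹ • (g - f)) v := by
    ext z
    simp [LinearMap.transvection.apply, hTv, inv_mul_eq_div, hf]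
  rw [hfactor, LinearMap.det_comp, LinearMap.transvection.det]
  simp [hfg]

variable {E : Type*} [NormedAddCommGroup E] [InnerProductSpace ℝ E] [FiniteDimensional ℝ E]

lemma det_add_rankOne_self_congr {T : E →L[ℝ] E} {v a b : E} (hTv : T v = 0)
    (hvT : ∀ z, ⟪v, T z⟫ = 0) (hab : ⟪v, a⟫ = ⟪v, b⟫) (ha : ⟪v, a⟫ ≠ 0) :
    (T + rankOne ℝ a a).det = (T + rankOne ℝ b b).det :=
  calc
    (T + rankOne ℝ a a).det
        = LinearMap.det ((T : E →ₗ[ℝ] E) + (innerₗ E a).smulRight b) :=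
      det_add_smulRight_congr_vector (f := innerₗ E v) hvT hab ha (innerₗ E a)
    _ = (T + rankOne ℝ b b).det :=
      det_add_smulRight_congr_functional (v := v) (f := innerₗ E a) (g := innerₗ E b) hTv
        (by simpa [real_inner_comm] using hab) (by simpa [real_inner_comm] using ha) b

end Determinant

section Calculus

variable {E F : Type*} [NormedAddCommGroup E] [NormedSpace ℝ E]
  [NormedAddCommGroup F] [NormedSpace ℝ F]

lemma fderiv_smul_of_homogeneous {f : E → F} {c : ℝ} (hc : c ≠ 0)
    (hf : ∀ x, f (c • x) = c • f x) (x : E) : fderiv ℝ f (c • x) = fderiv ℝ f x := by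
  have := invertibleOfNonzero hc
  have hcf : (f <| c • ·) = c • f := funext hf
  have hscaled : c • fderiv ℝ f (c • x) = c • fderiv ℝ f x := by
    rw [← fderiv_comp_smul, hcf, fderiv_const_smul_of_invertible]
  exact smul_right_injective _ hc hscaled

lemma fderiv_apply_self_of_homogeneous {f : E → F} {x : E} {k : ℕ}
    (hf : ∀ c : ℝ, 0 < c → f (c • x) = c ^ k • f x) (hd : DifferentiableAt ℝ f x) :
    fderiv ℝ f x x = (k : ℝ) • f x := by
  have hray : HasDerivAt (fun c : ℝ => c • x) x 1 := by
    simpa using (hasDerivAt_id (1 : ℝ)).smul_const x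
  have hcomp : HasDerivAt (fun c : ℝ => f (c • x)) (fderiv ℝ f x x) 1 :=
    HasFDerivAt.comp_hasDerivAt (1 : ℝ) (by simpa using hd.hasFDerivAt) hray
  have hpow : HasDerivAt (fun c : ℝ => c ^ k • f x) ((k : ℝ) • f x) 1 := by
    simpa using (hasDerivAt_pow k (1 : ℝ)).smul_const (f x)
  refine hcomp.unique (hpow.congr_of_eventuallyEq ?_)
  filter_upwards [lt_mem_nhds one_pos] with c hc using hf c hc

lemma fderiv_apply_sub_le_of_convexOn {f : E → ℝ} (hf : ConvexOn ℝ Set.univ f) {x : E}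
    (hd : DifferentiableAt ℝ f x) (z : E) : fderiv ℝ f x (z - x) ≤ f z - f x := by
  have hline : HasDerivAt (f ∘ AffineMap.lineMap x z) (fderiv ℝ f x (z - x)) (0 : ℝ) :=
    HasFDerivAt.comp_hasDerivAt 0 (by simpa using hd.hasFDerivAt) AffineMap.hasDerivAt_lineMap
  simpa [slope] using (hf.comp_affineMap (AffineMap.lineMap x z)).le_slope_of_hasDerivAt
    (Set.mem_univ 0) (Set.mem_univ 1) zero_lt_one hline

end Calculus

section SupportFunction

variable {E : Type*} [NormedAddCommGroup E] [InnerProductSpace ℝ E]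

/-- `H` is the support function of a convex body with the origin in its interior, extended
1-homogeneously from the sphere, and is of class `C²` away from the origin. -/
structure IsC2SupportFunction (H : E → ℝ) : Prop where
  map_smul : ∀ c : ℝ, 0 < c → ∀ x, H (c • x) = c * H x
  convexOn : ConvexOn ℝ Set.univ H
  contDiffOn : ContDiffOn ℝ 2 H {0}ᶜ
  pos_of_mem_sphere : ∀ x ∈ sphere (0 : E) 1, 0 < H x

/-- The convex body with support function `H`, as an intersection of half-spaces. -/
def wulffShape (H : E → ℝ) : Set E := {y | ∀ x, ⟪x, y⟫ ≤ H x}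

/-- The polar body `K*`, with the one-sided bound `⟪x, y⟫ ≤ 1`. -/
def polarBody (K : Set E) : Set E := {y | ∀ x ∈ K, ⟪x, y⟫ ≤ 1}

/-- `H` and `Hs` are `C²` support functions of a convex body and of its polar body. -/
structure IsPolarPair (H Hs : E → ℝ) : Prop where
  left : IsC2SupportFunction H
  right : IsC2SupportFunction Hs
  polarBody_eq : polarBody (wulffShape H) = wulffShape Hs

/-- The gradient `H ∇H` of `H² / 2`. For the support functions of a convex body and of its polar,
the two duality maps are inverse to each other. -/
def dualityMap [CompleteSpace E] (H : E → ℝ) (x : E) : E := H x • gradient H x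

namespace IsC2SupportFunction

variable {H : E → ℝ} {x : E}

lemma pos (hH : IsC2SupportFunction H) (hx : x ≠ 0) : 0 < H x := by
  have hnorm : 0 < ‖x‖⁻¹ := inv_pos.2 (norm_pos_iff.2 hx)
  have hunit : 0 < H (‖x‖⁻¹ • x) := hH.pos_of_mem_sphere _ (by simp [norm_smul, hx])
  rw [hH.map_smul _ hnorm] at hunit
  exact pos_of_mul_pos_right hunit hnorm.le

lemma contDiffAt (hH : IsC2SupportFunction H) (hx : x ≠ 0) : ContDiffAt ℝ 2 H x :=
  hH.contDiffOn.contDiffAt (isOpen_compl_singleton.mem_nhds hx)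

lemma differentiableAt (hH : IsC2SupportFunction H) (hx : x ≠ 0) : DifferentiableAt ℝ H x :=
  (hH.contDiffAt hx).differentiableAt two_ne_zero

lemma fderiv_apply_self (hH : IsC2SupportFunction H) (hx : x ≠ 0) : fderiv ℝ H x x = H x := by
  simpa using fderiv_apply_self_of_homogeneous (k := 1)
    (fun c hc => by simpa using hH.map_smul c hc x) (hH.differentiableAt hx)

variable [CompleteSpace E]

lemma differentiableAt_gradient (hH : IsC2SupportFunction H) (hx : x ≠ 0) :
    DifferentiableAt ℝ (gradient H) x :=
  (InnerProductSpace.toDual ℝ E).symm.toContinuousLinearEquiv.differentiableAt.comp x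
    (((hH.contDiffAt hx).fderiv_right (m := 1) one_add_one_eq_two.le).differentiableAt one_ne_zero)

lemma gradient_smul (hH : IsC2SupportFunction H) {c : ℝ} (hc : 0 < c) (x : E) :
    gradient H (c • x) = gradient H x := by
  rw [gradient, fderiv_smul_of_homogeneous hc.ne' (hH.map_smul c hc), gradient]

lemma inner_gradient_self (hH : IsC2SupportFunction H) (hx : x ≠ 0) :
    ⟪x, gradient H x⟫ = H x := by
  rw [real_inner_comm, inner_gradient_left, hH.fderiv_apply_self hx]

lemma gradient_ne_zero (hH : IsC2SupportFunction H) (hx : x ≠ 0) : gradient H x ≠ 0 :=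
  fun hzero => (hH.pos hx).ne' (by rw [← hH.inner_gradient_self hx, hzero, inner_zero_right])

lemma gradient_mem_wulffShape (hH : IsC2SupportFunction H) (hx : x ≠ 0) :
    gradient H x ∈ wulffShape H := by
  intro z
  have hsub := fderiv_apply_sub_le_of_convexOn hH.convexOn (hH.differentiableAt hx) z
  rw [map_sub, hH.fderiv_apply_self hx, sub_le_sub_iff_right] at hsub
  rwa [real_inner_comm, inner_gradient_left]

lemma fderiv_gradient_apply_self (hH : IsC2SupportFunction H) (hx : x ≠ 0) :
    fderiv ℝ (gradient H) x x = 0 := by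
  simpa using fderiv_apply_self_of_homogeneous (k := 0)
    (fun c hc => by simpa using hH.gradient_smul hc x) (hH.differentiableAt_gradient hx)

lemma inner_self_fderiv_gradient (hH : IsC2SupportFunction H) (hx : x ≠ 0) (z : E) :
    ⟪x, fderiv ℝ (gradient H) x z⟫ = 0 := by
  have hEuler : (fun y => ⟪y, gradient H y⟫) =ᶠ[nhds x] H := by
    filter_upwards [isOpen_compl_singleton.mem_nhds hx] with y hy using hH.inner_gradient_self hy
  have hderiv := DFunLike.congr_fun (hEuler.fderiv_eq (𝕜 := ℝ)) z
  rw [fderiv_inner_apply ℝ differentiableAt_fun_id (hH.differentiableAt_gradient hx),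
    fderiv_fun_id, ContinuousLinearMap.id_apply, real_inner_comm (gradient H x) z,
    inner_gradient_left] at hderiv
  exact add_eq_right.1 hderiv

lemma dualityMap_smul (hH : IsC2SupportFunction H) {c : ℝ} (hc : 0 < c) (x : E) :
    dualityMap H (c • x) = c • dualityMap H x := by
  rw [dualityMap, dualityMap, hH.map_smul c hc, hH.gradient_smul hc, mul_smul]

lemma hasFDerivAt_dualityMap (hH : IsC2SupportFunction H) (hx : x ≠ 0) :
    HasFDerivAt (dualityMap H)
      (H x • fderiv ℝ (gradient H) x + rankOne ℝ (gradient H x) (gradient H x)) x := by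
  have hrankOne : rankOne ℝ (gradient H x) (gradient H x) =
      (fderiv ℝ H x).smulRight (gradient H x) := by
    ext z
    simp [inner_gradient_left]
  rw [hrankOne]
  exact (hH.differentiableAt hx).hasFDerivAt.smul (hH.differentiableAt_gradient hx).hasFDerivAt

end IsC2SupportFunction

end SupportFunction

section Polarity

variable {E : Type*} [NormedAddCommGroup E] [InnerProductSpace ℝ E] {H Hs : E → ℝ}

lemma inner_le_mul_of_polarBody_eq (hH : IsC2SupportFunction H)
    (hpolar : polarBody (wulffShape H) = wulffShape Hs) (x : E) {w : E} (hw : w ≠ 0) :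
    ⟪x, w⟫ ≤ Hs x * H w := by
  have hHw := hH.pos hw
  have hmem : (H w)⁻¹ • w ∈ polarBody (wulffShape H) := by
    intro y hy
    rw [inner_smul_right, inv_mul_le_iff₀ hHw, mul_one, real_inner_comm]
    exact hy w
  rw [hpolar] at hmem
  have hx := hmem x
  rwa [inner_smul_right, inv_mul_le_iff₀ hHw, mul_comm] at hx

namespace IsPolarPair

variable [CompleteSpace E] {x : E}

lemma apply_gradient (hpair : IsPolarPair H Hs) (hx : x ≠ 0) : H (gradient Hs x) = 1 := by
  have hy := hpair.right.gradient_ne_zero hx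
  apply le_antisymm
  · have hmem := hpair.right.gradient_mem_wulffShape hx
    rw [← hpair.polarBody_eq] at hmem
    have hle := hmem _ (hpair.left.gradient_mem_wulffShape hy)
    rwa [real_inner_comm, hpair.left.inner_gradient_self hy] at hle
  · have hle := inner_le_mul_of_polarBody_eq hpair.left hpair.polarBody_eq x hy
    rw [hpair.right.inner_gradient_self hx] at hle
    exact (le_mul_iff_one_le_right (hpair.right.pos hx)).1 hle

lemma gradient_gradient (hpair : IsPolarPair H Hs) (hx : x ≠ 0) :
    gradient H (gradient Hs x) = (Hs x)⁻¹ • x := by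
  have hy := hpair.right.gradient_ne_zero hx
  -- The polar inequality `⟪x, w⟫ ≤ h*(x) h(w)` is an equality at `w = ∇h*(x)`.
  have hmin : IsLocalMin (fun w => Hs x * H w - ⟪x, w⟫) (gradient Hs x) := by
    filter_upwards [isOpen_compl_singleton.mem_nhds hy] with w hw
    rw [hpair.apply_gradient hx, hpair.right.inner_gradient_self hx, mul_one, sub_self,
      sub_nonneg]
    exact inner_le_mul_of_polarBody_eq hpair.left hpair.polarBody_eq x hw
  have hderiv := hmin.hasFDerivAt_eq_zero
    (((hpair.left.differentiableAt hy).hasFDerivAt.const_mul (Hs x)).sub (innerSL ℝ x).hasFDerivAt)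
  rw [eq_inv_smul_iff₀ (hpair.right.pos hx).ne']
  refine ext_inner_right ℝ fun z => ?_
  rw [real_inner_smul_left, inner_gradient_left]
  simpa [sub_eq_zero] using congrArg (· z) hderiv

lemma dualityMap_dualityMap (hpair : IsPolarPair H Hs) (hx : x ≠ 0) :
    dualityMap H (dualityMap Hs x) = x := by
  have hs := hpair.right.pos hx
  rw [dualityMap.eq_def Hs, hpair.left.dualityMap_smul hs, dualityMap,
    hpair.apply_gradient hx, hpair.gradient_gradient hx, one_smul, smul_inv_smul₀ hs.ne']

lemma fderiv_dualityMap_comp (hpair : IsPolarPair H Hs) (hx : x ≠ 0) :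
    fderiv ℝ (dualityMap H) (gradient Hs x) ∘L fderiv ℝ (dualityMap Hs) x =
      ContinuousLinearMap.id ℝ E := by
  have hs := hpair.right.pos hx
  have hy : dualityMap Hs x ≠ 0 := smul_ne_zero hs.ne' (hpair.right.gradient_ne_zero hx)
  have hinv : dualityMap H ∘ dualityMap Hs =ᶠ[nhds x] id := by
    filter_upwards [isOpen_compl_singleton.mem_nhds hx] with z hz
      using hpair.dualityMap_dualityMap hz
  rw [← fderiv_smul_of_homogeneous hs.ne' (hpair.left.dualityMap_smul hs), ← dualityMap.eq_def Hs,
    ← fderiv_comp x (hpair.left.hasFDerivAt_dualityMap hy).differentiableAt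
      (hpair.right.hasFDerivAt_dualityMap hx).differentiableAt, hinv.fderiv_eq, fderiv_id]

end IsPolarPair

end Polarity

section GaussCurvature

variable {n : ℕ} {H Hs : Euc n → ℝ} {u : Euc n}

lemma gradient_apply_eq_fderiv {ι : Type*} [Fintype ι] [DecidableEq ι]
    (f : EuclideanSpace ℝ ι → ℝ) (x : EuclideanSpace ℝ ι) (i : ι) :
    gradient f x i = fderiv ℝ f x (EuclideanSpace.single i 1) := by
  rw [← inner_gradient_left, EuclideanSpace.inner_single_right]
  simp

lemma ehess_apply_eq_fderiv_gradient {x : Euc n} (hd : DifferentiableAt ℝ (gradient H) x)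
    (i j : Fin (n + 1)) :
    ehess n H x i j = fderiv ℝ (gradient H) x (EuclideanSpace.single i 1) j := by
  have hcoord : HasFDerivAt (fun y => gradient H y j)
      (EuclideanSpace.proj j ∘L fderiv ℝ (gradient H) x) x :=
    (EuclideanSpace.proj (𝕜 := ℝ) j).hasFDerivAt.comp x hd.hasFDerivAt
  have hpartial : (fun y => fderiv ℝ H y (EuclideanSpace.single j 1)) =
      fun y => gradient H y j := funext fun y => (gradient_apply_eq_fderiv H y j).symm
  rw [ehess, Matrix.of_apply, hpartial, hcoord.fderiv]
  rfl

lemma det_bmat_eq_det_fderiv_gradient {x : Euc n} (hd : DifferentiableAt ℝ (gradient H) x) :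
    (bmat n H x).det = (fderiv ℝ (gradient H) x + H x • rankOne ℝ x x).det := by
  let e := (EuclideanSpace.basisFun (Fin (n + 1)) ℝ).toBasis
  have hmatrix : LinearMap.toMatrix e e (fderiv ℝ (gradient H) x + H x • rankOne ℝ x x :
      Euc n →L[ℝ] Euc n) = (bmat n H x)ᵀ := by
    ext i j
    simp [e, LinearMap.toMatrix_apply, bmat, ehess_apply_eq_fderiv_gradient hd,
      EuclideanSpace.inner_single_right]
  rw [← det_transpose, ← hmatrix, LinearMap.det_toMatrix, ContinuousLinearMap.det]

lemma det_fderiv_dualityMap (hH : IsC2SupportFunction H) (hu : u ∈ sphere (0 : Euc n) 1) :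
    (fderiv ℝ (dualityMap H) u).det = H u ^ (n + 2) * sigman n H u := by
  have hu0 : u ≠ 0 := ne_of_mem_sphere hu one_ne_zero
  have hHu := (hH.pos hu0).ne'
  have hinner : ⟪u, gradient H u⟫ = ⟪u, H u • u⟫ := by
    rw [hH.inner_gradient_self hu0, real_inner_smul_right, real_inner_self_eq_norm_sq,
      mem_sphere_zero_iff_norm.1 hu, one_pow, mul_one]
  calc
    (fderiv ℝ (dualityMap H) u).det
        = (H u • fderiv ℝ (gradient H) u + rankOne ℝ (gradient H u) (gradient H u)).det := by
      rw [(hH.hasFDerivAt_dualityMap hu0).fderiv]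
    _ = (H u • fderiv ℝ (gradient H) u + rankOne ℝ (H u • u) (H u • u)).det :=
      det_add_rankOne_self_congr (by simp [hH.fderiv_gradient_apply_self hu0])
        (by simp [real_inner_smul_right, hH.inner_self_fderiv_gradient hu0]) hinner
        (hH.inner_gradient_self hu0 ▸ hHu)
    _ = (H u • (fderiv ℝ (gradient H) u + H u • rankOne ℝ u u)).det := by
      simp [smul_add]
    _ = H u ^ (n + 1) * (bmat n H u).det := by
      rw [det_bmat_eq_det_fderiv_gradient (hH.differentiableAt_gradient hu0),
        ContinuousLinearMap.det, ContinuousLinearMap.toLinearMap_smul, LinearMap.det_smul,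
        finrank_euclideanSpace_fin, ContinuousLinearMap.det]
    _ = H u ^ (n + 2) * sigman n H u := by
      rw [sigman]
      field_simp
      ring

lemma IsPolarPair.gaussCurv_mul_gaussCurv (hpair : IsPolarPair H Hs)
    (hu : u ∈ sphere (0 : Euc n) 1) :
    gaussCurv n H (‖gradient Hs u‖⁻¹ • gradient Hs u) * gaussCurv n Hs u =
      (H (‖gradient Hs u‖⁻¹ • gradient Hs u) * Hs u) ^ (n + 2) := by
  have hu0 : u ≠ 0 := ne_of_mem_sphere hu one_ne_zero
  have hy := hpair.right.gradient_ne_zero hu0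
  have hρ : 0 < ‖gradient Hs u‖⁻¹ := inv_pos.2 (norm_pos_iff.2 hy)
  set v := ‖gradient Hs u‖⁻¹ • gradient Hs u with hv_def
  have hv : v ∈ sphere (0 : Euc n) 1 := by simp [v, norm_smul, hy]
  have hdet : (fderiv ℝ (dualityMap H) v).det * (fderiv ℝ (dualityMap Hs) u).det = 1 := by
    rw [hv_def, fderiv_smul_of_homogeneous hρ.ne' (hpair.left.dualityMap_smul hρ)]
    simpa [ContinuousLinearMap.det, LinearMap.det_comp] using congrArg ContinuousLinearMap.det
      (hpair.fderiv_dualityMap_comp hu0)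
  rw [det_fderiv_dualityMap hpair.left hv, det_fderiv_dualityMap hpair.right hu] at hdet
  rw [gaussCurv, gaussCurv, ← mul_inv]
  refine inv_eq_of_mul_eq_one_right ?_
  rw [← hdet]
  ring

end GaussCurvature

/- `ρ` and `s` stand for `|Dh*|` and `h*`; at the corresponding point of the sphere `h = ρ⁻¹` and
`|Dh| = s⁻¹`. -/
lemma dual_equation_of_mul_eq_pow {m : ℕ} {p q ρ s κ κs : ℝ} (hρ : 0 < ρ) (hs : 0 < s)
    (hκ : κ * κs = (ρ⁻¹ * s) ^ (m + 2))
    (heq : ρ⁻¹ ^ (p - 1) * s⁻¹ ^ ((m : ℝ) + 1 - q) * κ = 1) :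
    s ^ (-q - 1) * ρ ^ ((m : ℝ) + 1 + p) * κs = 1 := by
  have hs_exp : s ^ (-q - 1) * s⁻¹ ^ ((m : ℝ) + 1 - q) * s ^ (m + 2) = 1 := by
    rw [Real.inv_rpow hs.le, ← Real.rpow_neg hs.le, ← Real.rpow_natCast, ← Real.rpow_add hs,
      ← Real.rpow_add hs]
    convert Real.rpow_zero s using 2
    push_cast
    ring
  have hρ_exp : ρ ^ ((m : ℝ) + 1 + p) * ρ⁻¹ ^ (p - 1) * ρ⁻¹ ^ (m + 2) = 1 := by
    rw [← Real.rpow_natCast, Real.inv_rpow hρ.le, Real.inv_rpow hρ.le, ← Real.rpow_neg hρ.le,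
      ← Real.rpow_neg hρ.le, ← Real.rpow_add hρ, ← Real.rpow_add hρ]
    convert Real.rpow_zero ρ using 2
    push_cast
    ring
  calc
    s ^ (-q - 1) * ρ ^ ((m : ℝ) + 1 + p) * κs
        = s ^ (-q - 1) * ρ ^ ((m : ℝ) + 1 + p) * κs *
          (ρ⁻¹ ^ (p - 1) * s⁻¹ ^ ((m : ℝ) + 1 - q) * κ) := by rw [heq, mul_one]
    _ = s ^ (-q - 1) * s⁻¹ ^ ((m : ℝ) + 1 - q) * (ρ ^ ((m : ℝ) + 1 + p) * ρ⁻¹ ^ (p - 1)) *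
          (κ * κs) := by ring
    _ = (s ^ (-q - 1) * s⁻¹ ^ ((m : ℝ) + 1 - q) * s ^ (m + 2)) *
          (ρ ^ ((m : ℝ) + 1 + p) * ρ⁻¹ ^ (p - 1) * ρ⁻¹ ^ (m + 2)) := by rw [hκ, mul_pow]; ring
    _ = 1 := by rw [hs_exp, hρ_exp, one_mul]

theorem polar_body_satisfies_dual_equation_general {n : ℕ} {p q : ℝ} {H Hs : Euc n → ℝ}
    (hpair : IsPolarPair H Hs)
    (heq : ∀ x ∈ sphere (0 : Euc n) 1,
      H x ^ (p - 1) * ‖gradient H x‖ ^ ((n : ℝ) + 1 - q) * gaussCurv n H x = 1) :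
    ∀ u ∈ sphere (0 : Euc n) 1,
      Hs u ^ (-q - 1) * ‖gradient Hs u‖ ^ ((n : ℝ) + 1 + p) * gaussCurv n Hs u = 1 := by
  intro u hu
  have hu0 : u ≠ 0 := ne_of_mem_sphere hu one_ne_zero
  have hs : 0 < Hs u := hpair.right.pos hu0
  have hρ : 0 < ‖gradient Hs u‖ := norm_pos_iff.2 (hpair.right.gradient_ne_zero hu0)
  set v := ‖gradient Hs u‖⁻¹ • gradient Hs u with hv_def
  have hHv : H v = ‖gradient Hs u‖⁻¹ := by
    rw [hv_def, hpair.left.map_smul _ (inv_pos.2 hρ), hpair.apply_gradient hu0, mul_one]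
  have hgradient : ‖gradient H v‖ = (Hs u)⁻¹ := by
    rw [hv_def, hpair.left.gradient_smul (inv_pos.2 hρ),
      hpair.gradient_gradient hu0, norm_smul, mem_sphere_zero_iff_norm.1 hu, mul_one, norm_inv,
      Real.norm_of_nonneg hs.le]
  have hcurv := hpair.gaussCurv_mul_gaussCurv hu
  have hv := heq v (by simp [v, norm_smul, hρ.ne'])
  rw [hHv, hgradient] at hv
  rw [← hv_def, hHv] at hcurv
  exact dual_equation_of_mul_eq_pow hρ hs hcurv hv

/-- If a smooth, strictly convex body `K ⊂ ℝ^{n+1}` with the origin in its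
interior satisfies the isotropic `L_p` dual Minkowski equation `h^{p-1}|Dh|^{n+1-q}𝒦 = 1` on
`S^n`, then its polar body `K*` (with support function `h*` encoded by `Hs`) satisfies the
isotropic `L_{-q}` dual Minkowski equation `(h*)^{-q-1}|Dh*|^{n+1+p}𝒦* = 1` on `S^n`. -/
theorem polar_body_satisfies_dual_equation
    (n : ℕ) (hn : 2 ≤ n) (p q : ℝ)
    (H : Euc n → ℝ) (K : Set (Euc n))
    (hK : K = {y : Euc n | ∀ x : Euc n, ⟪x, y⟫ ≤ H x})
    (hhomog : ∀ c : ℝ, 0 < c → ∀ x : Euc n, H (c • x) = c * H x)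
    (hconv : ConvexOn ℝ Set.univ H)
    (hsmooth : ContDiffOn ℝ (⊤ : ℕ∞) H {(0 : Euc n)}ᶜ)
    (hpos : ∀ x ∈ sphere (0 : Euc n) 1, 0 < H x)
    (hposdef : ∀ x ∈ sphere (0 : Euc n) 1, (bmat n H x).PosDef)
    (heq : ∀ x ∈ sphere (0 : Euc n) 1,
      H x ^ (p - 1) * ‖gradient H x‖ ^ ((n : ℝ) + 1 - q) * gaussCurv n H x = 1)
    (Hs : Euc n → ℝ) (Kstar : Set (Euc n))
    (hKstar : Kstar = {y : Euc n | ∀ x ∈ K, ⟪x, y⟫ ≤ 1})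
    (hKstar' : Kstar = {y : Euc n | ∀ x : Euc n, ⟪x, y⟫ ≤ Hs x})
    (hhomogs : ∀ c : ℝ, 0 < c → ∀ x : Euc n, Hs (c • x) = c * Hs x)
    (hconvs : ConvexOn ℝ Set.univ Hs)
    (hsmooths : ContDiffOn ℝ (⊤ : ℕ∞) Hs {(0 : Euc n)}ᶜ)
    (hposs : ∀ x ∈ sphere (0 : Euc n) 1, 0 < Hs x)
    (hposdefs : ∀ x ∈ sphere (0 : Euc n) 1, (bmat n Hs x).PosDef) :
    ∀ u ∈ sphere (0 : Euc n) 1,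
      Hs u ^ (-q - 1) * ‖gradient Hs u‖ ^ ((n : ℝ) + 1 + p) * gaussCurv n Hs u = 1 :=
  polar_body_satisfies_dual_equation_general
    { left := ⟨hhomog, hconv, hsmooth.of_le (WithTop.coe_le_coe.2 le_top), hpos⟩
      right := ⟨hhomogs, hconvs, hsmooths.of_le (WithTop.coe_le_coe.2 le_top), hposs⟩
      polarBody_eq := by subst hK; exact hKstar.symm.trans hKstar' }
    heq
end
end

section
/- Let K ⊂ ℝ^{n+1} be a smooth, strictly convex body with the origin in its interior, with support function h, Gauss curvature 𝒦, inverse Gauss map X = Dh, centro-affine metric g, centro-affine Laplacian Δ, and measure dV = h σ_n dμ. Let f ∈ C²(S^n), let {E_k}_{k=1}^{n+1} be an orthonormal basis of ℝ^{n+1}, and set f_k = f ⟨X, E_k⟩. Then pointwise on S^n: Σ_{k=1}^{n+1} f_k (Δ f_k + n f_k) = f² ⟨∇̄ log(h^{n+2}/𝒦), h X⟩ + f |X|² Δf + f g(∇f, ∇|X|²), where ∇ is the gradient with respect to g. -/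
open MeasureTheory Matrix Metric
open scoped RealInnerProductSpace

noncomputable section

/-!
Everything reduces to the vector identity `Δ⟨X, w⟩ + n⟨X, w⟩ = h⟨∇̄ log(h^{n+2}/𝒦), w⟩` for
constant `w`. Let `B = D²H + h x xᵀ`, where `H` is the `1`-homogeneous extension of `h`. Writing
`⟨X, w⟩ = ∂_w H`, the Laplacian on the left produces `h tr(B⁻¹ D²∂_w H)`, while Jacobi's formula
for the derivative of `log det B` produces the same trace on the right; `B x = h x` and Euler's
relations for `H` and `D²H` account for the remaining terms. Multiplying `⟨X, E_k⟩` by `f` costs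
only the Leibniz rule `Δ(uv) = u Δv + v Δu + 2 g(∇u, ∇v)`, and summing over `k` turns
`∑ ⟨X, E_k⟩²` into `|X|²`.
-/

section LinearAlgebra

variable {m : Type*} [Fintype m]

lemma mulVec_dotProduct_comm_of_isSymm {R : Type*} [CommSemiring R] {M : Matrix m m R}
    (hM : M.IsSymm) (a b : m → R) : M *ᵥ a ⬝ᵥ b = M *ᵥ b ⬝ᵥ a := by
  rw [dotProduct_comm, dotProduct_mulVec, ← mulVec_transpose, hM.eq]

lemma trace_mul_vecMulVec {R : Type*} [CommSemiring R] (M : Matrix m m R) (a b : m → R) :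
    (M * vecMulVec a b).trace = M *ᵥ a ⬝ᵥ b := by
  rw [mul_vecMulVec, trace_vecMulVec]

lemma ofLp_dotProduct_ofLp (v w : EuclideanSpace ℝ m) : v.ofLp ⬝ᵥ w.ofLp = ⟪v, w⟫ := by
  rw [EuclideanSpace.inner_eq_star_dotProduct, star_trivial, dotProduct_comm]

variable [DecidableEq m]

lemma hasFDerivAt_det {𝕜 E : Type*} [NontriviallyNormedField 𝕜] [NormedAddCommGroup E]
    [NormedSpace 𝕜 E] {A : E → Matrix m m 𝕜} {A' : m → m → E →L[𝕜] 𝕜} {x : E}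
    (hA : ∀ i j, HasFDerivAt (fun y => A y i j) (A' i j) x) :
    HasFDerivAt (fun y => (A y).det) (∑ i, ∑ j, (A x).adjugate j i • A' i j) x := by
  let detRows : ContinuousMultilinearMap 𝕜 (fun _ : m => m → 𝕜) 𝕜 :=
    ⟨(detRowAlternating (R := 𝕜) (n := m)).toMultilinearMap,
      Continuous.matrix_det (A := fun M : Matrix m m 𝕜 => M) continuous_id⟩
  have hrows : HasFDerivAt (fun y i j => A y i j)
      (ContinuousLinearMap.pi fun i => ContinuousLinearMap.pi fun j => A' i j) x :=
    hasFDerivAt_pi.2 fun i => hasFDerivAt_pi.2 (hA i)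
  convert! (detRows.hasFDerivAt (x := fun i j => A x i j)).comp x hrows using 1
  ext w
  simp only [ContinuousLinearMap.comp_apply, ContinuousMultilinearMap.linearDeriv_apply,
    _root_.sum_apply, _root_.smul_apply, smul_eq_mul]
  refine Finset.sum_congr rfl fun i _ => ?_
  have hcramer : ((A x).updateRow i fun j => A' i j w).det
      = ∑ j, (A x).adjugate j i * A' i j w := by
    rw [← cramer_transpose_apply, cramer_eq_adjugate_mulVec, ← adjugate_transpose]
    rfl
  exact hcramer.symm

lemma fderiv_log_det {E : Type*} [NormedAddCommGroup E] [NormedSpace ℝ E]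
    {A : E → Matrix m m ℝ} {x : E} (hA : ∀ i j, DifferentiableAt ℝ (fun y => A y i j) x)
    (hdet : (A x).det ≠ 0) (w : E) :
    fderiv ℝ (fun y => Real.log (A y).det) x w
      = ((A x)⁻¹ * of fun i j => fderiv ℝ (fun y => A y i j) x w).trace := by
  rw [((hasFDerivAt_det fun i j => (hA i j).hasFDerivAt).log hdet).fderiv, inv_def,
    Ring.inverse_eq_inv', smul_mul, trace_smul, trace_mul_comm]
  simp [trace, mul_apply, mul_comm]

end LinearAlgebra

section Homogeneous

variable {E F : Type*} [NormedAddCommGroup E] [NormedSpace ℝ E] [NormedAddCommGroup F]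
  [NormedSpace ℝ F]

/-- Positive homogeneity of degree `k`: a support function has degree `1`, its inverse Gauss map
degree `0` and its Hessian degree `-1`. The origin is included, so a function of nonzero degree
vanishes there. -/
def IsPosHomogeneous (k : ℤ) (u : E → F) : Prop :=
  ∀ c : ℝ, 0 < c → ∀ y, u (c • y) = c ^ k • u y

namespace IsPosHomogeneous

variable {k : ℤ} {u : E → F} {x : E}

protected lemma fderiv (hu : IsPosHomogeneous k u) : IsPosHomogeneous (k - 1) (fderiv ℝ u) := by
  intro c hc y
  have hscale : c • fderiv ℝ u (c • y) = c ^ k • fderiv ℝ u y := by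
    rw [← fderiv_comp_smul, funext (hu c hc)]
    exact congrFun (fderiv_const_smul_field (c ^ k)) y
  rw [zpow_sub_one₀ hc.ne', mul_comm, mul_smul, ← hscale, inv_smul_smul₀ hc.ne']

lemma clm_apply_const {L : E → E →L[ℝ] F} (hL : IsPosHomogeneous k L) (w : E) :
    IsPosHomogeneous k fun y => L y w := fun c hc y => by
  simp only [hL c hc y, _root_.smul_apply]

lemma fderiv_apply_self (hu : IsPosHomogeneous k u) (hd : DifferentiableAt ℝ u x) :
    fderiv ℝ u x x = (k : ℝ) • u x := by
  have hray : HasDerivAt (fun c : ℝ => c • x) x 1 := by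
    simpa using (hasDerivAt_id (1 : ℝ)).smul_const x
  have hchain : HasDerivAt (fun c : ℝ => u (c • x)) (fderiv ℝ u x x) 1 :=
    HasFDerivAt.comp_hasDerivAt (f := fun c : ℝ => c • x) (l := u) 1
      (by simpa using hd.hasFDerivAt) hray
  have hpow : HasDerivAt (fun c : ℝ => c ^ k • u x) ((k : ℝ) • u x) 1 := by
    simpa using (hasDerivAt_zpow k (1 : ℝ) (.inl one_ne_zero)).smul_const (u x)
  refine hchain.unique (hpow.congr_of_eventuallyEq ?_)
  filter_upwards [lt_mem_nhds one_pos] with c hc using hu c hc x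

end IsPosHomogeneous

end Homogeneous

section RadialExtension

variable {E F : Type*} [NormedAddCommGroup E]

section NormedSpace

variable [NormedSpace ℝ E]

/-- The degree-`0` homogeneous extension of the restriction of `u` to the unit sphere, through
which `sphGrad` and `caLap` see their argument. Its value at the origin is `u 0`. -/
def radialExt (u : E → F) : E → F :=
  fun y => u (‖y‖⁻¹ • y)

lemma radialExt_apply_of_norm_eq_one (u : E → F) {x : E} (hx : ‖x‖ = 1) :
    radialExt u x = u x := by
  simp [radialExt, hx]

lemma IsPosHomogeneous.radialExt_eq [NormedAddCommGroup F] [NormedSpace ℝ F] {u : E → F}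
    (hu : IsPosHomogeneous 0 u) : radialExt u = u := by
  ext y
  rcases eq_or_ne y 0 with rfl | hy
  · simp [radialExt]
  · simpa [radialExt] using hu ‖y‖⁻¹ (by positivity) y

end NormedSpace

variable [InnerProductSpace ℝ E] [NormedAddCommGroup F] [NormedSpace ℝ F] {x : E}

lemma contDiffAt_radialExt {u : E → F} {k : WithTop ℕ∞} (hx : ‖x‖ = 1)
    (hu : ContDiffAt ℝ k u x) : ContDiffAt ℝ k (radialExt u) x := by
  have hx0 : x ≠ 0 := norm_ne_zero_iff.1 (by simp [hx])
  refine ContDiffAt.comp (g := u) x (by simpa [hx] using hu) ?_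
  exact ((contDiffAt_norm ℝ hx0).inv (by simp [hx])).smul contDiffAt_id

lemma hasFDerivAt_norm_of_norm_eq_one (hx : ‖x‖ = 1) :
    HasFDerivAt (fun y : E => ‖y‖) (innerSL ℝ x) x := by
  convert! (hasStrictFDerivAt_norm_sq x).hasFDerivAt.sqrt (by simp [hx]) using 1
  · ext y
    rw [Real.sqrt_sq (norm_nonneg y)]
  · ext w
    simp [hx]

lemma fderiv_inv_norm_smul_self (hx : ‖x‖ = 1) (w : E) :
    fderiv ℝ (fun y : E => ‖y‖⁻¹ • y) x w = w - ⟪x, w⟫ • x := by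
  have hinv : HasFDerivAt (fun y : E => ‖y‖⁻¹) _ x :=
    (hasDerivAt_inv (by simp [hx])).comp_hasFDerivAt x (hasFDerivAt_norm_of_norm_eq_one hx)
  have hsmul : HasFDerivAt (fun y : E => ‖y‖⁻¹ • y) _ x := hinv.fun_smul (hasFDerivAt_id x)
  rw [hsmul.fderiv]
  simp [hx, sub_eq_add_neg]

lemma fderiv_radialExt_apply {u : E → F} (hx : ‖x‖ = 1) (hu : DifferentiableAt ℝ u x) (w : E) :
    fderiv ℝ (radialExt u) x w = fderiv ℝ u x (w - ⟪x, w⟫ • x) := by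
  have hx0 : x ≠ 0 := norm_ne_zero_iff.1 (by simp [hx])
  have hproj : DifferentiableAt ℝ (fun y : E => ‖y‖⁻¹ • y) x :=
    ((differentiableAt_id.norm ℝ hx0).inv (by simp [hx])).smul differentiableAt_id
  have hcomp := fderiv_comp (g := u) x (by simpa [hx] using hu) hproj
  rw [show radialExt u = u ∘ fun y : E => ‖y‖⁻¹ • y from rfl, hcomp,
    ContinuousLinearMap.comp_apply, fderiv_inv_norm_smul_self hx]
  simp [hx]

end RadialExtension

section Hessian

variable {E F : Type*} [NormedAddCommGroup E] [NormedSpace ℝ E] [NormedAddCommGroup F]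
  [NormedSpace ℝ F] {u : E → F} {x : E}

lemma contDiffAt_fderiv_apply {k l : WithTop ℕ∞} (hu : ContDiffAt ℝ l u x) (hkl : k + 1 ≤ l)
    (w : E) : ContDiffAt ℝ k (fun y => fderiv ℝ u y w) x :=
  (hu.fderiv_right hkl).clm_apply contDiffAt_const

lemma fderiv_fderiv_apply (hu : ContDiffAt ℝ 2 u x) (v w : E) :
    fderiv ℝ (fun y => fderiv ℝ u y w) x v = fderiv ℝ (fderiv ℝ u) x v w := by
  have hd : DifferentiableAt ℝ (fderiv ℝ u) x :=
    (hu.fderiv_right (m := 1) (by norm_num)).differentiableAt one_ne_zero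
  simp [fderiv_clm_apply hd (differentiableAt_const _)]

lemma fderiv_fderiv_apply_comm (hu : ContDiffAt ℝ 2 u x) (v w : E) :
    fderiv ℝ (fun y => fderiv ℝ u y w) x v = fderiv ℝ (fun y => fderiv ℝ u y v) x w := by
  rw [fderiv_fderiv_apply hu, fderiv_fderiv_apply hu, hu.isSymmSndFDerivAt (by simp) v w]

end Hessian

section EuclideanHessian

variable {n : ℕ} {u v : Euc n → ℝ} {x : Euc n}

lemma gradient_apply_coord (u : Euc n → ℝ) (x : Euc n) (i : Fin (n + 1)) :
    gradient u x i = fderiv ℝ u x (EuclideanSpace.single i 1) := by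
  simp [← inner_gradient_left, EuclideanSpace.inner_single_right]

lemma gradient_mul (hu : DifferentiableAt ℝ u x) (hv : DifferentiableAt ℝ v x) :
    gradient (fun y => u y * v y) x = u x • gradient v x + v x • gradient u x := by
  ext i
  simp [gradient_apply_coord, fderiv_fun_mul hu hv]

lemma isSymm_ehess (hu : ContDiffAt ℝ 2 u x) : (ehess n u x).IsSymm :=
  Matrix.IsSymm.ext fun _ _ => fderiv_fderiv_apply_comm hu _ _

lemma differentiableAt_ehess_apply (hu : ContDiffAt ℝ 3 u x) (i j : Fin (n + 1)) :
    DifferentiableAt ℝ (fun y => ehess n u y i j) x :=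
  (contDiffAt_fderiv_apply (k := 1) (contDiffAt_fderiv_apply (k := 2) hu (by norm_num) _)
    (by norm_num) _).differentiableAt one_ne_zero

lemma ehess_mulVec (hu : ContDiffAt ℝ 2 u x) (w : Euc n) :
    ehess n u x *ᵥ w.ofLp = (gradient (fun y => fderiv ℝ u y w) x).ofLp := by
  ext i
  rw [gradient_apply_coord, fderiv_fderiv_apply hu]
  conv_rhs => rw [← (EuclideanSpace.basisFun _ ℝ).sum_repr w]
  simp [mulVec, dotProduct, ehess, fderiv_fderiv_apply hu, mul_comm]

lemma ehess_mul (hu : ContDiffAt ℝ 2 u x) (hv : ContDiffAt ℝ 2 v x) :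
    ehess n (fun y => u y * v y) x
      = u x • ehess n v x + v x • ehess n u x
        + vecMulVec (gradient u x).ofLp (gradient v x).ofLp
        + vecMulVec (gradient v x).ofLp (gradient u x).ofLp := by
  ext i j
  have hfirst : (fun y => fderiv ℝ (fun z => u z * v z) y (EuclideanSpace.single j 1))
      =ᶠ[nhds x] fun y => u y * fderiv ℝ v y (EuclideanSpace.single j 1)
        + v y * fderiv ℝ u y (EuclideanSpace.single j 1) := by
    filter_upwards [hu.eventually (by simp), hv.eventually (by simp)] with y huy hvy
    rw [fderiv_fun_mul (huy.differentiableAt two_ne_zero) (hvy.differentiableAt two_ne_zero)]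
    simp
  have hu1 := hu.differentiableAt two_ne_zero
  have hv1 := hv.differentiableAt two_ne_zero
  have hu2 := (contDiffAt_fderiv_apply (k := 1) hu (by norm_num)
    (EuclideanSpace.single j 1)).differentiableAt one_ne_zero
  have hv2 := (contDiffAt_fderiv_apply (k := 1) hv (by norm_num)
    (EuclideanSpace.single j 1)).differentiableAt one_ne_zero
  rw [ehess, of_apply, hfirst.fderiv_eq, fderiv_fun_add (hu1.fun_mul hv2) (hv1.fun_mul hu2),
    fderiv_fun_mul hu1 hv2, fderiv_fun_mul hv1 hu2]
  simp only [ehess, vecMulVec_apply, gradient_apply_coord, _root_.add_apply, _root_.smul_apply,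
    Matrix.add_apply, Matrix.smul_apply, of_apply, smul_eq_mul]
  ring

lemma ehess_fderiv_apply (hu : ContDiffAt ℝ 3 u x) (w : Euc n) :
    ehess n (fun y => fderiv ℝ u y w) x
      = of fun i j => fderiv ℝ (fun y => ehess n u y i j) x w := by
  ext i j
  have hswap : (fun y => fderiv ℝ (fun z => fderiv ℝ u z w) y (EuclideanSpace.single j 1))
      =ᶠ[nhds x] fun y => fderiv ℝ (fun z => fderiv ℝ u z (EuclideanSpace.single j 1)) y w := by
    filter_upwards [hu.eventually (by simp)] with y huy
    exact fderiv_fderiv_apply_comm (huy.of_le (by norm_num)) _ _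
  rw [ehess, of_apply, hswap.fderiv_eq]
  exact fderiv_fderiv_apply_comm (contDiffAt_fderiv_apply hu (by norm_num) _) _ _

lemma IsPosHomogeneous.ehess_apply {k : ℤ} (hu : IsPosHomogeneous k u) (i j : Fin (n + 1)) :
    IsPosHomogeneous (k - 1 - 1) fun y => ehess n u y i j :=
  (hu.fderiv.clm_apply_const _).fderiv.clm_apply_const _

lemma IsPosHomogeneous.ehess_fderiv_apply_self {k : ℤ} (hu : IsPosHomogeneous k u)
    (hu3 : ContDiffAt ℝ 3 u x) :
    ehess n (fun y => fderiv ℝ u y x) x = ((k : ℝ) - 2) • ehess n u x := by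
  ext i j
  rw [ehess_fderiv_apply hu3, of_apply,
    (hu.ehess_apply i j).fderiv_apply_self (differentiableAt_ehess_apply hu3 i j)]
  push_cast
  rw [sub_sub, one_add_one_eq_two, Matrix.smul_apply]

end EuclideanHessian

section SupportMatrix

variable {n : ℕ} {H : Euc n → ℝ} {x : Euc n}

lemma bmat_eq_ehess_add_vecMulVec (H : Euc n → ℝ) (x : Euc n) :
    bmat n H x = ehess n H x + H x • vecMulVec x.ofLp x.ofLp := rfl

lemma isSymm_bmat (hH : ContDiffAt ℝ 2 H x) : (bmat n H x).IsSymm := by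
  rw [bmat_eq_ehess_add_vecMulVec]
  exact (isSymm_ehess hH).add (IsSymm.smul (transpose_vecMulVec _ _) _)

lemma bmat_mulVec (hH : ContDiffAt ℝ 2 H x) (w : Euc n) :
    bmat n H x *ᵥ w.ofLp
      = (gradient (fun y => fderiv ℝ H y w) x).ofLp + (H x * ⟪x, w⟫) • x.ofLp := by
  rw [bmat_eq_ehess_add_vecMulVec, add_mulVec, ehess_mulVec hH, smul_mulVec, vecMulVec_mulVec,
    ofLp_dotProduct_ofLp, op_smul_eq_smul, smul_smul]

lemma bmat_mulVec_self (hH : ContDiffAt ℝ 2 H x) (hhom : IsPosHomogeneous 1 H) (hx : ‖x‖ = 1) :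
    bmat n H x *ᵥ x.ofLp = H x • x.ofLp := by
  have hradial : gradient (fun y => fderiv ℝ H y x) x = 0 := by
    ext i
    have hd := (contDiffAt_fderiv_apply (k := 1) hH (by norm_num)
      (EuclideanSpace.single i 1)).differentiableAt one_ne_zero
    rw [gradient_apply_coord, fderiv_fderiv_apply_comm hH,
      (hhom.fderiv.clm_apply_const _).fderiv_apply_self hd]
    simp
  rw [bmat_mulVec hH, hradial]
  simp [hx]

lemma inv_bmat_mulVec_smul_self (hH : ContDiffAt ℝ 2 H x) (hhom : IsPosHomogeneous 1 H)
    (hx : ‖x‖ = 1) (hdet : (bmat n H x).det ≠ 0) :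
    H x • (bmat n H x)⁻¹ *ᵥ x.ofLp = x.ofLp := by
  rw [← mulVec_smul, ← bmat_mulVec_self hH hhom hx, mulVec_mulVec,
    nonsing_inv_mul _ hdet.isUnit, one_mulVec]

lemma inv_bmat_mulVec_gradient_fderiv_apply (hH : ContDiffAt ℝ 2 H x)
    (hhom : IsPosHomogeneous 1 H) (hx : ‖x‖ = 1) (hdet : (bmat n H x).det ≠ 0) (w : Euc n) :
    (bmat n H x)⁻¹ *ᵥ (gradient (fun y => fderiv ℝ H y w) x).ofLp = (w - ⟪x, w⟫ • x).ofLp := by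
  have hgrad : (gradient (fun y => fderiv ℝ H y w) x).ofLp
      = bmat n H x *ᵥ w.ofLp - ⟪x, w⟫ • H x • x.ofLp := by
    rw [bmat_mulVec hH, smul_smul, mul_comm, add_sub_cancel_right]
  rw [hgrad, mulVec_sub, mulVec_mulVec, nonsing_inv_mul _ hdet.isUnit, one_mulVec, mulVec_smul,
    mulVec_smul, inv_bmat_mulVec_smul_self hH hhom hx hdet]
  rfl

lemma trace_inv_bmat_mul_self (hdet : (bmat n H x).det ≠ 0) :
    ((bmat n H x)⁻¹ * bmat n H x).trace = n + 1 := by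
  simp [nonsing_inv_mul _ hdet.isUnit]

lemma trace_inv_bmat_mul_ehess (hH : ContDiffAt ℝ 2 H x) (hhom : IsPosHomogeneous 1 H)
    (hx : ‖x‖ = 1) (hdet : (bmat n H x).det ≠ 0) :
    ((bmat n H x)⁻¹ * ehess n H x).trace = n := by
  have hrank_one : ((bmat n H x)⁻¹ * H x • vecMulVec x.ofLp x.ofLp).trace = 1 := by
    rw [Matrix.mul_smul, trace_smul, trace_mul_vecMulVec, ← smul_dotProduct,
      inv_bmat_mulVec_smul_self hH hhom hx hdet, ofLp_dotProduct_ofLp]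
    simp [hx]
  have hehess : ehess n H x = bmat n H x - H x • vecMulVec x.ofLp x.ofLp :=
    (add_sub_cancel_right _ _).symm
  rw [hehess, mul_sub, trace_sub, trace_inv_bmat_mul_self hdet, hrank_one, add_sub_cancel_right]

end SupportMatrix

section CentroAffineCalculus

variable {n : ℕ} {H u v : Euc n → ℝ} {x : Euc n}

lemma sphGrad_eq_gradient_radialExt (u : Euc n → ℝ) (x : Euc n) :
    sphGrad n u x = gradient (radialExt u) x := rfl

lemma sphGrad_sum_sq {ι : Type*} [Fintype ι] {u : ι → Euc n → ℝ} (hx : ‖x‖ = 1)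
    (hu : ∀ k, DifferentiableAt ℝ (u k) x) :
    sphGrad n (fun y => ∑ k, u k y ^ 2) x = ∑ k, (2 * u k x) • sphGrad n (u k) x := by
  refine ext_inner_right ℝ fun w => ?_
  simp only [sphGrad_eq_gradient_radialExt, sum_inner, real_inner_smul_left, inner_gradient_left]
  rw [fderiv_radialExt_apply hx (by fun_prop), fderiv_fun_sum fun k _ => (hu k).fun_pow 2]
  simp [fderiv_fun_pow 2 (hu _), fderiv_radialExt_apply hx (hu _)]

lemma gInner_eq_dotProduct (H u v : Euc n → ℝ) (x : Euc n) :
    gInner n H u v x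
      = H x * ((bmat n H x)⁻¹ *ᵥ (sphGrad n u x).ofLp ⬝ᵥ (sphGrad n v x).ofLp) := rfl

lemma gInner_sum_sq_right {ι : Type*} [Fintype ι] {v : ι → Euc n → ℝ} (hx : ‖x‖ = 1)
    (hv : ∀ k, DifferentiableAt ℝ (v k) x) :
    gInner n H u (fun y => ∑ k, v k y ^ 2) x = ∑ k, 2 * v k x * gInner n H u (v k) x := by
  simp only [gInner_eq_dotProduct, sphGrad_sum_sq hx hv, WithLp.ofLp_sum, WithLp.ofLp_smul,
    dotProduct_sum, dotProduct_smul, Finset.mul_sum, smul_eq_mul]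
  exact Finset.sum_congr rfl fun k _ => by ring

lemma bmat_mul (hH : ContDiffAt ℝ 2 H x) (hu : ContDiffAt ℝ 2 u x) :
    bmat n (fun y => H y * u y) x
      = u x • bmat n H x + H x • ehess n u x
        + vecMulVec (gradient H x).ofLp (gradient u x).ofLp
        + vecMulVec (gradient u x).ofLp (gradient H x).ofLp := by
  rw [bmat_eq_ehess_add_vecMulVec, bmat_eq_ehess_add_vecMulVec, ehess_mul hH hu]
  module

lemma caLap_eq_trace_add_dotProduct (hH : ContDiffAt ℝ 2 H x) (hdet : (bmat n H x).det ≠ 0)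
    (hx : ‖x‖ = 1) (hu : ContDiffAt ℝ 2 u x) :
    caLap n H u x = H x * ((bmat n H x)⁻¹ * ehess n (radialExt u) x).trace
      + 2 * ((bmat n H x)⁻¹ *ᵥ (sphGrad n u x).ofLp ⬝ᵥ (gradient H x).ofLp) := by
  have hprod := bmat_mul hH (contDiffAt_radialExt hx hu)
  rw [radialExt_apply_of_norm_eq_one u hx] at hprod
  change ((bmat n H x)⁻¹ * bmat n (fun y => H y * radialExt u y) x).trace - (n + 1) * u x = _
  simp only [hprod, mul_add, Matrix.mul_smul, trace_add, trace_smul, trace_mul_vecMulVec,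
    trace_inv_bmat_mul_self hdet, smul_eq_mul, sphGrad_eq_gradient_radialExt]
  rw [mulVec_dotProduct_comm_of_isSymm (isSymm_bmat hH).inv (gradient H x).ofLp]
  ring

lemma caLap_mul (hH : ContDiffAt ℝ 2 H x) (hdet : (bmat n H x).det ≠ 0) (hx : ‖x‖ = 1)
    (hu : ContDiffAt ℝ 2 u x) (hv : ContDiffAt ℝ 2 v x) :
    caLap n H (fun y => u y * v y) x
      = u x * caLap n H v x + v x * caLap n H u x + 2 * gInner n H u v x := by
  have hu' := contDiffAt_radialExt hx hu
  have hv' := contDiffAt_radialExt hx hv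
  have hext : radialExt (fun y => u y * v y) = fun y => radialExt u y * radialExt v y := rfl
  have hgrad := gradient_mul (hu'.differentiableAt two_ne_zero) (hv'.differentiableAt two_ne_zero)
  rw [caLap_eq_trace_add_dotProduct hH hdet hx (hu.mul hv),
    caLap_eq_trace_add_dotProduct hH hdet hx hu, caLap_eq_trace_add_dotProduct hH hdet hx hv,
    gInner_eq_dotProduct]
  simp only [sphGrad_eq_gradient_radialExt, hext, hgrad, ehess_mul hu' hv',
    radialExt_apply_of_norm_eq_one _ hx, mul_add, Matrix.mul_smul, trace_add, trace_smul,
    trace_mul_vecMulVec, WithLp.ofLp_add, WithLp.ofLp_smul, mulVec_add, mulVec_smul,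
    add_dotProduct, smul_dotProduct, smul_eq_mul]
  rw [mulVec_dotProduct_comm_of_isSymm (isSymm_bmat hH).inv (gradient (radialExt v) x).ofLp
    (gradient (radialExt u) x).ofLp]
  ring

end CentroAffineCalculus

section InverseGaussMap

variable {n : ℕ} {H : Euc n → ℝ} {x : Euc n}

lemma contDiffAt_inner_gradient {k l : WithTop ℕ∞} (hH : ContDiffAt ℝ l H x) (hkl : k + 1 ≤ l)
    (w : Euc n) : ContDiffAt ℝ k (fun y => ⟪gradient H y, w⟫) x := by
  simpa only [inner_gradient_left] using contDiffAt_fderiv_apply hH hkl w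

lemma caLap_inner_gradient (hH : ContDiffAt ℝ 3 H x) (hhom : IsPosHomogeneous 1 H)
    (hdet : (bmat n H x).det ≠ 0) (hx : ‖x‖ = 1) (w : Euc n) :
    caLap n H (fun y => ⟪gradient H y, w⟫) x
      = H x * ((bmat n H x)⁻¹ * ehess n (fun y => fderiv ℝ H y w) x).trace
        + 2 * fderiv ℝ H x (w - ⟪x, w⟫ • x) := by
  have hH2 : ContDiffAt ℝ 2 H x := hH.of_le (by norm_num)
  have hext : radialExt (fun y => fderiv ℝ H y w) = fun y => fderiv ℝ H y w :=
    (hhom.fderiv.clm_apply_const w).radialExt_eq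
  simp only [inner_gradient_left]
  rw [caLap_eq_trace_add_dotProduct hH2 hdet hx (contDiffAt_fderiv_apply hH (by norm_num) w),
    sphGrad_eq_gradient_radialExt, hext, inv_bmat_mulVec_gradient_fderiv_apply hH2 hhom hx hdet,
    ofLp_dotProduct_ofLp, real_inner_comm, inner_gradient_left]

lemma differentiableAt_bmat_apply (hH : ContDiffAt ℝ 3 H x) (i j : Fin (n + 1)) :
    DifferentiableAt ℝ (fun y => bmat n H y i j) x :=
  (differentiableAt_ehess_apply hH i j).fun_add
    ((hH.differentiableAt three_ne_zero).fun_mul (by fun_prop))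

lemma fderiv_bmat_apply (hH : ContDiffAt ℝ 3 H x) (w : Euc n) :
    (of fun i j => fderiv ℝ (fun y => bmat n H y i j) x w)
      = ehess n (fun y => fderiv ℝ H y w) x + fderiv ℝ H x w • vecMulVec x.ofLp x.ofLp
        + H x • (vecMulVec x.ofLp w.ofLp + vecMulVec w.ofLp x.ofLp) := by
  ext i j
  have hcoord (k : Fin (n + 1)) : HasFDerivAt (fun y : Euc n => y k)
      (EuclideanSpace.proj k : Euc n →L[ℝ] ℝ) x :=
    (EuclideanSpace.proj k : Euc n →L[ℝ] ℝ).hasFDerivAt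
  have hentry : HasFDerivAt (fun y => bmat n H y i j) _ x :=
    (differentiableAt_ehess_apply hH i j).hasFDerivAt.fun_add
      ((hH.differentiableAt three_ne_zero).hasFDerivAt.fun_mul ((hcoord i).fun_mul (hcoord j)))
  rw [of_apply, hentry.fderiv, ehess_fderiv_apply hH]
  simp only [vecMulVec_apply, _root_.add_apply, _root_.smul_apply, PiLp.proj_apply,
    Matrix.add_apply, Matrix.smul_apply, of_apply, smul_eq_mul]
  ring

lemma fderiv_log_det_bmat (hH : ContDiffAt ℝ 3 H x) (hhom : IsPosHomogeneous 1 H)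
    (hne : H x ≠ 0) (hdet : (bmat n H x).det ≠ 0) (hx : ‖x‖ = 1) (w : Euc n) :
    fderiv ℝ (fun y => Real.log (bmat n H y).det) x w
      = ((bmat n H x)⁻¹ * ehess n (fun y => fderiv ℝ H y w) x).trace
        + fderiv ℝ H x w / H x + 2 * ⟪x, w⟫ := by
  have hH2 : ContDiffAt ℝ 2 H x := hH.of_le (by norm_num)
  have hinv : (bmat n H x)⁻¹ *ᵥ x.ofLp = (H x)⁻¹ • x.ofLp :=
    (inv_smul_eq_iff₀ hne).2 (inv_bmat_mulVec_smul_self hH2 hhom hx hdet).symm |>.symm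
  have hxx : x.ofLp ⬝ᵥ x.ofLp = 1 := by rw [ofLp_dotProduct_ofLp]; simp [hx]
  rw [fderiv_log_det (differentiableAt_bmat_apply hH) hdet, fderiv_bmat_apply hH]
  simp only [mul_add, Matrix.mul_smul, trace_add, trace_smul, trace_mul_vecMulVec, smul_eq_mul]
  rw [mulVec_dotProduct_comm_of_isSymm (isSymm_bmat hH2).inv w.ofLp, hinv]
  simp only [smul_dotProduct, hxx, ofLp_dotProduct_ofLp, smul_eq_mul]
  field_simp
  ring

lemma logQ_eq_log_add_log_det {y : Euc n} (hne : H y ≠ 0) (hdet : (bmat n H y).det ≠ 0) :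
    logQ n H y = (n + 1) * Real.log (H y) + Real.log (bmat n H y).det := by
  have hquot : H y ^ (n + 2) / gaussCurv n H y = H y ^ (n + 1) * (bmat n H y).det := by
    simp only [gaussCurv, sigman]
    field_simp
    ring
  rw [logQ, hquot, Real.log_mul (pow_ne_zero _ hne) hdet, Real.log_pow]
  push_cast
  rfl

lemma differentiableAt_det_bmat (hH : ContDiffAt ℝ 3 H x) :
    DifferentiableAt ℝ (fun y => (bmat n H y).det) x :=
  (hasFDerivAt_det fun i j => (differentiableAt_bmat_apply hH i j).hasFDerivAt).differentiableAt

lemma logQ_eventuallyEq (hH : ContDiffAt ℝ 3 H x) (hne : H x ≠ 0)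
    (hdet : (bmat n H x).det ≠ 0) :
    logQ n H =ᶠ[nhds x]
      fun y => (n + 1) * Real.log (H y) + Real.log (bmat n H y).det := by
  filter_upwards [hH.continuousAt.eventually_ne hne,
    (differentiableAt_det_bmat hH).continuousAt.eventually_ne hdet] with y hne_y hdet_y
  exact logQ_eq_log_add_log_det hne_y hdet_y

lemma differentiableAt_logQ (hH : ContDiffAt ℝ 3 H x) (hne : H x ≠ 0)
    (hdet : (bmat n H x).det ≠ 0) : DifferentiableAt ℝ (logQ n H) x :=
  ((((hH.differentiableAt three_ne_zero).log hne).const_mul _).fun_add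
    ((differentiableAt_det_bmat hH).log hdet)).congr_of_eventuallyEq
      (logQ_eventuallyEq hH hne hdet)

lemma fderiv_logQ (hH : ContDiffAt ℝ 3 H x) (hhom : IsPosHomogeneous 1 H)
    (hne : H x ≠ 0) (hdet : (bmat n H x).det ≠ 0) (hx : ‖x‖ = 1) (w : Euc n) :
    fderiv ℝ (logQ n H) x w
      = (n + 2) * (fderiv ℝ H x w / H x)
        + ((bmat n H x)⁻¹ * ehess n (fun y => fderiv ℝ H y w) x).trace + 2 * ⟪x, w⟫ := by
  have hH1 := hH.differentiableAt three_ne_zero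
  rw [(logQ_eventuallyEq hH hne hdet).fderiv_eq, fderiv_fun_add ((hH1.log hne).const_mul _)
    ((differentiableAt_det_bmat hH).log hdet), _root_.add_apply,
    fderiv_log_det_bmat hH hhom hne hdet hx, fderiv_const_mul (hH1.log hne),
    fderiv.log hH1 hne]
  simp only [_root_.smul_apply, smul_eq_mul]
  ring

lemma trace_inv_bmat_mul_ehess_fderiv_tangent (hH : ContDiffAt ℝ 3 H x)
    (hhom : IsPosHomogeneous 1 H) (hdet : (bmat n H x).det ≠ 0) (hx : ‖x‖ = 1) (w : Euc n) :
    ((bmat n H x)⁻¹ * ehess n (fun y => fderiv ℝ H y (w - ⟪x, w⟫ • x)) x).trace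
      = ((bmat n H x)⁻¹ * ehess n (fun y => fderiv ℝ H y w) x).trace + n * ⟪x, w⟫ := by
  have hlin : ehess n (fun y => fderiv ℝ H y (w - ⟪x, w⟫ • x)) x
      = ehess n (fun y => fderiv ℝ H y w) x
        - ⟪x, w⟫ • ehess n (fun y => fderiv ℝ H y x) x := by
    rw [ehess_fderiv_apply hH, ehess_fderiv_apply hH, ehess_fderiv_apply hH]
    ext i j
    simp
  rw [hlin, hhom.ehess_fderiv_apply_self hH, mul_sub, Matrix.mul_smul, Matrix.mul_smul, trace_sub,
    trace_smul, trace_smul, trace_inv_bmat_mul_ehess (hH.of_le (by norm_num)) hhom hx hdet]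
  push_cast
  simp only [smul_eq_mul]
  ring

lemma caLap_inner_gradient_add_eq_inner_sphGrad_logQ (hH : ContDiffAt ℝ 3 H x)
    (hhom : IsPosHomogeneous 1 H) (hne : H x ≠ 0) (hdet : (bmat n H x).det ≠ 0)
    (hx : ‖x‖ = 1) (w : Euc n) :
    caLap n H (fun y => ⟪gradient H y, w⟫) x + n * ⟪gradient H x, w⟫
      = H x * ⟪sphGrad n (logQ n H) x, w⟫ := by
  have htangent : ⟪x, w - ⟪x, w⟫ • x⟫ = 0 := by
    simp [inner_sub_right, real_inner_smul_right, hx]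
  have heuler : fderiv ℝ H x x = H x := by
    simpa using hhom.fderiv_apply_self (hH.differentiableAt three_ne_zero)
  have hproj : fderiv ℝ H x (w - ⟪x, w⟫ • x) = fderiv ℝ H x w - ⟪x, w⟫ * H x := by
    rw [map_sub, map_smul, heuler, smul_eq_mul]
  rw [caLap_inner_gradient hH hhom hdet hx, sphGrad_eq_gradient_radialExt, inner_gradient_left,
    inner_gradient_left, fderiv_radialExt_apply hx (differentiableAt_logQ hH hne hdet),
    fderiv_logQ hH hhom hne hdet hx, trace_inv_bmat_mul_ehess_fderiv_tangent hH hhom hdet hx,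
    htangent, hproj]
  field_simp
  ring

end InverseGaussMap

theorem pointwise_identity_for_fk_general {n : ℕ} {ι : Type*} [Fintype ι] {H f : Euc n → ℝ}
    {x : Euc n} (hx : ‖x‖ = 1) (hhom : IsPosHomogeneous 1 H) (hH : ContDiffAt ℝ 3 H x)
    (hpos : 0 < H x) (hdet : 0 < (bmat n H x).det) (hf : ContDiffAt ℝ 2 f x)
    (b : OrthonormalBasis ι ℝ (Euc n)) :
    ∑ k, (f x * ⟪gradient H x, b k⟫) *
        (caLap n H (fun y => f y * ⟪gradient H y, b k⟫) x + n * (f x * ⟪gradient H x, b k⟫))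
      = f x ^ 2 * ⟪sphGrad n (logQ n H) x, H x • gradient H x⟫
        + f x * ‖gradient H x‖ ^ 2 * caLap n H f x
        + f x * gInner n H f (fun y => ‖gradient H y‖ ^ 2) x := by
  have hX (k : ι) : ContDiffAt ℝ 2 (fun y => ⟪gradient H y, b k⟫) x :=
    contDiffAt_inner_gradient hH (by norm_num) (b k)
  have hnorm (y : Euc n) : ‖gradient H y‖ ^ 2 = ∑ k, ⟪gradient H y, b k⟫ ^ 2 :=
    (b.sum_sq_inner_left _).symm
  have hlogQ : ⟪sphGrad n (logQ n H) x, gradient H x⟫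
      = ∑ k, ⟪gradient H x, b k⟫ * ⟪sphGrad n (logQ n H) x, b k⟫ := by
    rw [real_inner_comm, ← b.sum_inner_mul_inner]
    simp only [real_inner_comm (sphGrad n (logQ n H) x)]
  rw [real_inner_smul_right, hlogQ]
  simp only [hnorm]
  rw [gInner_sum_sq_right hx fun k => (hX k).differentiableAt two_ne_zero]
  simp only [Finset.mul_sum, Finset.sum_mul, ← Finset.sum_add_distrib]
  refine Finset.sum_congr rfl fun k _ => ?_
  rw [caLap_mul (hH.of_le (by norm_num)) hdet.ne' hx hf (hX k)]
  linear_combination (f x ^ 2 * ⟪gradient H x, b k⟫) *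
    caLap_inner_gradient_add_eq_inner_sphGrad_logQ hH hhom hpos.ne' hdet.ne' hx (b k)

/-- For a smooth, strictly convex body `K ⊂ ℝ^{n+1}` with the origin in its
interior, `f ∈ C²(S^n)` (encoded 0-homogeneously), an orthonormal basis `{E_k}` of `ℝ^{n+1}`
and `f_k = f⟨X, E_k⟩`, pointwise on `S^n`:
`Σ_k f_k (Δf_k + n f_k) = f²⟨∇̄ log(h^{n+2}/𝒦), hX⟩ + f|X|²Δf + f g(∇f, ∇|X|²)`. -/
theorem pointwise_identity_for_fk
    (n : ℕ) (hn : 2 ≤ n)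
    (H : Euc n → ℝ) (K : Set (Euc n))
    (hK : K = {y : Euc n | ∀ x : Euc n, ⟪x, y⟫ ≤ H x})
    (hhomog : ∀ c : ℝ, 0 < c → ∀ x : Euc n, H (c • x) = c * H x)
    (hconv : ConvexOn ℝ Set.univ H)
    (hsmooth : ContDiffOn ℝ (⊤ : ℕ∞) H {(0 : Euc n)}ᶜ)
    (hpos : ∀ x ∈ sphere (0 : Euc n) 1, 0 < H x)
    (hposdef : ∀ x ∈ sphere (0 : Euc n) 1, (bmat n H x).PosDef)
    (f : Euc n → ℝ)
    (hf0 : ∀ c : ℝ, 0 < c → ∀ x : Euc n, f (c • x) = f x)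
    (hfC2 : ContDiffOn ℝ 2 f {(0 : Euc n)}ᶜ)
    (b : OrthonormalBasis (Fin (n + 1)) ℝ (Euc n)) :
    ∀ x ∈ sphere (0 : Euc n) 1,
      (∑ k : Fin (n + 1), (f x * ⟪gradient H x, b k⟫) *
          (caLap n H (fun y => f y * ⟪gradient H y, b k⟫) x
            + n * (f x * ⟪gradient H x, b k⟫)))
        = (f x) ^ 2 * ⟪sphGrad n (logQ n H) x, H x • gradient H x⟫
            + f x * ‖gradient H x‖ ^ 2 * caLap n H f x
            + f x * gInner n H f (fun y => ‖gradient H y‖ ^ 2) x := by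
  intro x hxs
  have hnhds : ({0}ᶜ : Set (Euc n)) ∈ nhds x :=
    isOpen_compl_singleton.mem_nhds (ne_zero_of_mem_unit_sphere ⟨x, hxs⟩)
  exact pointwise_identity_for_fk_general (mem_sphere_zero_iff_norm.1 hxs)
    (fun c hc y => by simpa using hhomog c hc y)
    ((hsmooth.contDiffAt hnhds).of_le (WithTop.coe_le_coe.2 (le_top : (3 : ℕ∞) ≤ ⊤))) (hpos x hxs)
    (hposdef x hxs).det_pos (hfC2.contDiffAt hnhds) b
end
end
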